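/- arXiv:2402.03983 — 2 statements merged into one kernel-verified Lean document; each statement's English description precedes it below -/
import Mathlib

section
/- Fix an integer m ≥ 2 and M = {M_β}_{|β|≤m} ⊆ ℂ, and for each positive integer j let μ_j ∈ 𝓜_m^M be the measure whose Fourier transform is φ_{1/j}. Then the sequence (μ_j) is Cauchy with respect to d_m: d_m(μ_j, μ_k) ≤ |1/j − 1/k| for all positive integers j, k. -/
open MeasureTheory Filter Topology
open scoped ENNReal NNReal

noncomputable section
open scoped Classical


abbrev Vd (d : ℕ) := EuclideanSpace ℝ (Fin d)

/-- The total variation measure `|μ|` of a complex measure (realized as the sum of the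
total variations of its real and imaginary parts). -/
def ctv {d : ℕ} (μ : ComplexMeasure (Vd d)) : Measure (Vd d) :=
  μ.re.totalVariation + μ.im.totalVariation

/-- Integral of a complex-valued function against a complex measure. -/
def cint {d : ℕ} (μ : ComplexMeasure (Vd d)) (f : Vd d → ℂ) : ℂ :=
  ((∫ x, f x ∂μ.re.toJordanDecomposition.posPart) -
    (∫ x, f x ∂μ.re.toJordanDecomposition.negPart)) +
  Complex.I * ((∫ x, f x ∂μ.im.toJordanDecomposition.posPart) -
    (∫ x, f x ∂μ.im.toJordanDecomposition.negPart))

/-- The Fourier transform `μ̂(ξ) = ∫ e^{-i x·ξ} dμ(x)` of a complex measure. -/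
def ftc {d : ℕ} (μ : ComplexMeasure (Vd d)) (ξ : Vd d) : ℂ :=
  cint μ (fun x => Complex.exp (-(Complex.I) * ((∑ i, x i * ξ i : ℝ) : ℂ)))

/-- The Fourier-based distance `d_m(μ,ν) = sup_{ξ ≠ 0} |μ̂(ξ)-ν̂(ξ)|/|ξ|^m` (valued in `ℝ≥0∞`). -/
def dm {d : ℕ} (m : ℕ) (μ ν : ComplexMeasure (Vd d)) : ℝ≥0∞ :=
  ⨆ ξ : {ξ : Vd d // ξ ≠ 0}, ENNReal.ofReal (‖ftc μ ξ - ftc ν ξ‖ / ‖(ξ : Vd d)‖ ^ m)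

/-- The finite set of multi-indices `β ∈ ℕ^d` with `|β| ≤ m`. -/
def multiIdx (d m : ℕ) : Finset (Fin d → ℕ) :=
  (Fintype.piFinset fun _ : Fin d => Finset.range (m + 1)).filter fun γ => ∑ i, γ i ≤ m

/-- The set `𝓜_m^M` of complex measures with finite `m`-th absolute moment and
moments prescribed by `M`. -/
def MomentSet (d m : ℕ) (M : (Fin d → ℕ) → ℂ) : Set (ComplexMeasure (Vd d)) :=
  {μ | (∫⁻ x, (‖x‖₊ : ℝ≥0∞) ^ m ∂(ctv μ)) < ⊤ ∧
       ∀ β : Fin d → ℕ, (∑ i, β i) ≤ m →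
         cint μ (fun x => ∏ i, ((x i : ℂ)) ^ (β i)) = M β}

/-- The polynomial `P(ξ) = Σ_{|γ|≤m} (M_γ/γ!) (-iξ)^γ`. -/
def Ppoly (d m : ℕ) (M : (Fin d → ℕ) → ℂ) (ξ : Vd d) : ℂ :=
  ∑ γ ∈ multiIdx d m,
    (M γ / ∏ i, (Nat.factorial (γ i) : ℂ)) * ∏ i, (-(Complex.I) * (ξ i)) ^ (γ i)

/-- The function `φ_δ`. -/
def phiFun (d m : ℕ) (M : (Fin d → ℕ) → ℂ) (δ : ℝ) (ξ : Vd d) : ℂ :=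
  if ξ = 0 then Ppoly d m M 0
  else (Ppoly d m M ξ +
      ((‖ξ‖ ^ (m + 2) * Real.sin (1 / ‖ξ‖ ^ m) * Real.exp (-δ / ‖ξ‖ ^ 2) : ℝ) : ℂ)) *
    ((Real.exp (-‖ξ‖ ^ (2 * m)) : ℝ) : ℂ)

/-- The function `f_δ`. -/
def fdelta (d m : ℕ) (δ : ℝ) (ξ : Vd d) : ℝ :=
  if ξ = 0 then 0
  else ‖ξ‖ ^ (m + 2) * Real.sin (1 / ‖ξ‖ ^ m) * Real.exp (-δ / ‖ξ‖ ^ 2)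

/-- First-order partial derivative in the `i`-th coordinate direction. -/
def pderiv1 {d : ℕ} {F : Type*} [NormedAddCommGroup F] [NormedSpace ℝ F]
    (i : Fin d) (f : Vd d → F) : Vd d → F :=
  fun ξ => fderiv ℝ f ξ (EuclideanSpace.single i 1)

/-- The multi-index partial derivative `D^β = ∂_{ξ_1}^{β_1} ⋯ ∂_{ξ_d}^{β_d}`. -/
def Dmulti {d : ℕ} {F : Type*} [NormedAddCommGroup F] [NormedSpace ℝ F]
    (β : Fin d → ℕ) (f : Vd d → F) : Vd d → F :=
  (List.ofFn fun i : Fin d => (pderiv1 i)^[β i]).foldr (fun op g => op g) f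

/-!
The polynomial `P` cancels in `φ_a - φ_b`, leaving `(f_a - f_b) e^{-|ξ|^{2m}}`. Since `exp` is
`1`-Lipschitz on the nonpositive reals, `|e^{-a/|ξ|²} - e^{-b/|ξ|²}| ≤ |a - b| / |ξ|²`: the factor
`|ξ|^{m+2}` of `f_δ` absorbs this `|ξ|^{-2}` and leaves exactly the weight `|ξ|^m` of `d_m`.
-/

theorem abs_exp_sub_exp_le (x y : ℝ) :
    |Real.exp x - Real.exp y| ≤ Real.exp (max x y) * |x - y| := by
  wlog hyx : y ≤ x generalizing x y
  · simpa only [abs_sub_comm, max_comm] using this y x (le_of_not_ge hyx)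
  have hexp : Real.exp y = Real.exp x * Real.exp (y - x) := by
    rw [← Real.exp_add, add_sub_cancel]
  rw [max_eq_left hyx, abs_of_nonneg (sub_nonneg.mpr hyx),
    abs_of_nonneg (sub_nonneg.mpr (Real.exp_le_exp.mpr hyx))]
  calc Real.exp x - Real.exp y = Real.exp x * (1 - Real.exp (y - x)) := by rw [hexp]; ring
    _ ≤ Real.exp x * (x - y) :=
      mul_le_mul_of_nonneg_left (by linarith [Real.add_one_le_exp (y - x)]) (Real.exp_nonneg x)

theorem abs_exp_sub_exp_le_of_nonpos {x y : ℝ} (hx : x ≤ 0) (hy : y ≤ 0) :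
    |Real.exp x - Real.exp y| ≤ |x - y| :=
  (abs_exp_sub_exp_le x y).trans <|
    mul_le_of_le_one_left (abs_nonneg _) (Real.exp_le_one_iff.mpr (max_le hx hy))

theorem abs_exp_neg_div_sub_exp_neg_div_le {a b s : ℝ} (ha : 0 ≤ a) (hb : 0 ≤ b) (hs : 0 ≤ s) :
    |Real.exp (-a / s) - Real.exp (-b / s)| ≤ |a - b| / s := by
  have hnonpos {c : ℝ} (hc : 0 ≤ c) : -c / s ≤ 0 :=
    div_nonpos_of_nonpos_of_nonneg (neg_nonpos.mpr hc) hs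
  calc |Real.exp (-a / s) - Real.exp (-b / s)|
      ≤ |-a / s - -b / s| := abs_exp_sub_exp_le_of_nonpos (hnonpos ha) (hnonpos hb)
    _ = |a - b| / s := by
      rw [← sub_div, neg_sub_neg, abs_div, abs_of_nonneg hs, abs_sub_comm]

section

variable {d m : ℕ} {a b : ℝ}

theorem abs_fdelta_sub_fdelta_le (ha : 0 ≤ a) (hb : 0 ≤ b) (ξ : Vd d) :
    |fdelta d m a ξ - fdelta d m b ξ| ≤ |a - b| * ‖ξ‖ ^ m := by
  by_cases hξ : ξ = 0
  · simp only [fdelta, if_pos hξ, sub_self, abs_zero]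
    positivity
  have hξ_norm : ‖ξ‖ ≠ 0 := norm_ne_zero_iff.mpr hξ
  simp only [fdelta, if_neg hξ, ← mul_sub]
  rw [abs_mul, abs_mul, abs_of_nonneg (by positivity : 0 ≤ ‖ξ‖ ^ (m + 2))]
  calc ‖ξ‖ ^ (m + 2) * |Real.sin (1 / ‖ξ‖ ^ m)| *
        |Real.exp (-a / ‖ξ‖ ^ 2) - Real.exp (-b / ‖ξ‖ ^ 2)|
      ≤ ‖ξ‖ ^ (m + 2) * 1 * (|a - b| / ‖ξ‖ ^ 2) := by
        gcongr
        · exact Real.abs_sin_le_one _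
        · exact abs_exp_neg_div_sub_exp_neg_div_le ha hb (sq_nonneg _)
    _ = |a - b| * ‖ξ‖ ^ m := by rw [pow_add]; field_simp

theorem phiFun_sub_phiFun (M : (Fin d → ℕ) → ℂ) (a b : ℝ) (ξ : Vd d) :
    phiFun d m M a ξ - phiFun d m M b ξ =
      (((fdelta d m a ξ - fdelta d m b ξ) * Real.exp (-‖ξ‖ ^ (2 * m)) : ℝ) : ℂ) := by
  by_cases hξ : ξ = 0
  · simp only [phiFun, fdelta, if_pos hξ, sub_self, zero_mul, Complex.ofReal_zero]
  · simp only [phiFun, fdelta, if_neg hξ]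
    push_cast
    ring

theorem norm_phiFun_sub_phiFun_le (M : (Fin d → ℕ) → ℂ) (ha : 0 ≤ a) (hb : 0 ≤ b) (ξ : Vd d) :
    ‖phiFun d m M a ξ - phiFun d m M b ξ‖ ≤ |a - b| * ‖ξ‖ ^ m := by
  have hexp : Real.exp (-‖ξ‖ ^ (2 * m)) ≤ 1 :=
    Real.exp_le_one_iff.mpr (neg_nonpos.mpr (by positivity))
  rw [phiFun_sub_phiFun, Complex.norm_real, Real.norm_eq_abs, abs_mul, Real.abs_exp]
  exact (mul_le_of_le_one_right (abs_nonneg _) hexp).trans (abs_fdelta_sub_fdelta_le ha hb ξ)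

theorem dm_le_ofReal {μ ν : ComplexMeasure (Vd d)} {C : ℝ}
    (h : ∀ ξ ≠ 0, ‖ftc μ ξ - ftc ν ξ‖ ≤ C * ‖ξ‖ ^ m) : dm m μ ν ≤ ENNReal.ofReal C := by
  refine iSup_le fun ⟨ξ, hξ⟩ => ENNReal.ofReal_le_ofReal ?_
  exact (div_le_iff₀ (pow_pos (norm_pos_iff.mpr hξ) m)).mpr (h ξ hξ)

theorem stmt14_general {M : (Fin d → ℕ) → ℂ} {μ ν : ComplexMeasure (Vd d)}
    (ha : 0 ≤ a) (hb : 0 ≤ b) (hμ : ftc μ = phiFun d m M a) (hν : ftc ν = phiFun d m M b) :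
    dm m μ ν ≤ ENNReal.ofReal |a - b| := by
  refine dm_le_ofReal fun ξ _ => ?_
  rw [hμ, hν]
  exact norm_phiFun_sub_phiFun_le M ha hb ξ

end

/-- For `m ≥ 2` and prescribed moments `M`, let `μ_j ∈ 𝓜_m^M` (for `j ≥ 1`)
be the measure whose Fourier transform is `φ_{1/j}`. Then `(μ_j)` is `d_m`-Cauchy:
`d_m(μ_j, μ_k) ≤ |1/j - 1/k|` for all `j, k ≥ 1`. -/
theorem stmt14 (d m : ℕ) (hm : 2 ≤ m) (M : (Fin d → ℕ) → ℂ)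
    (μ : ℕ → ComplexMeasure (Vd d))
    (hμ : ∀ j : ℕ, 1 ≤ j →
      μ j ∈ MomentSet d m M ∧ ftc (μ j) = phiFun d m M (1 / (j : ℝ))) :
    ∀ j k : ℕ, 1 ≤ j → 1 ≤ k →
      dm m (μ j) (μ k) ≤ ENNReal.ofReal |1 / (j : ℝ) - 1 / (k : ℝ)| := by
  intro j k hj hk
  exact stmt14_general (by positivity) (by positivity) (hμ j hj).2 (hμ k hk).2

end
end

section
/- Fix an integer m ≥ 2 and M = {M_β}_{|β|≤m} ⊆ ℂ, and for each positive integer j let μ_j ∈ 𝓜_m^M be the measure whose Fourier transform is φ_{1/j}. There is no measure μ ∈ 𝓜_m^M such that d_m(μ_j, μ) → 0 as j → ∞. -/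
open MeasureTheory Filter Topology
open scoped ENNReal NNReal

noncomputable section
open scoped Classical


/-!
If `d_m(μ_j, ν) → 0` then `ν̂ = lim φ_{1/j} = φ_0` away from the origin, and `ν̂` is `C²` because `ν`
has a finite second absolute moment. Restricting `φ_0` to a ray and undoing the smooth operations in
its definition leaves `t ↦ t ^ (m + 2) * sin (1 / t ^ m)`. The derivative of this function is
`-m t cos (1 / t ^ m) + O(t ^ (m + 1))`, whose difference quotient at `0` oscillates.
-/

section Oscillation

theorem eq_of_periodic_of_tendsto_atTop {X : Type*} [TopologicalSpace X] [T2Space X] {f : ℝ → X}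
    {c : ℝ} (hf : Function.Periodic f c) (hc : 0 < c) {l : X} (hl : Tendsto f atTop (𝓝 l))
    (x : ℝ) : f x = l := by
  have hseq : Tendsto (fun n : ℕ => x + n * c) atTop atTop :=
    tendsto_atTop_add_const_left _ _ (tendsto_natCast_atTop_atTop.atTop_mul_const hc)
  refine tendsto_nhds_unique (tendsto_const_nhds.congr fun n => ?_) (hl.comp hseq)
  exact (hf.nat_mul n x).symm

theorem not_tendsto_cos_atTop (l : ℝ) : ¬ Tendsto Real.cos atTop (𝓝 l) := by
  intro hl
  have hconst := eq_of_periodic_of_tendsto_atTop Real.cos_periodic Real.two_pi_pos hl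
  have hcos : Real.cos 0 = Real.cos Real.pi := (hconst 0).trans (hconst Real.pi).symm
  norm_num at hcos

theorem not_tendsto_cos_one_div_pow_nhdsGT_zero {m : ℕ} (hm : m ≠ 0) (l : ℝ) :
    ¬ Tendsto (fun t : ℝ => Real.cos (1 / t ^ m)) (𝓝[>] 0) (𝓝 l) := by
  intro hl
  have hroot : Tendsto (fun s : ℝ => s ^ (-(m : ℝ)⁻¹)) atTop (𝓝[>] 0) := by
    refine tendsto_nhdsWithin_iff.2 ⟨tendsto_rpow_neg_atTop (by positivity), ?_⟩
    filter_upwards [eventually_gt_atTop 0] with s hs using Real.rpow_pos_of_pos hs _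
  refine not_tendsto_cos_atTop l ((hl.comp hroot).congr' ?_)
  filter_upwards [eventually_ge_atTop 0] with s hs
  simp only [Function.comp_apply, Real.rpow_neg hs, inv_pow, Real.rpow_inv_natCast_pow hs hm,
    one_div, inv_inv]

theorem tendsto_pow_mul_nhdsGT_zero {n : ℕ} (hn : n ≠ 0) {u : ℝ → ℝ} (hu : ∀ t, |u t| ≤ 1) :
    Tendsto (fun t : ℝ => t ^ n * u t) (𝓝[>] 0) (𝓝 0) := by
  have hpow : Tendsto (fun t : ℝ => ‖t ^ n‖) (𝓝[>] 0) (𝓝 0) :=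
    ((continuous_pow n).norm.tendsto' 0 0 (by simp [hn])).mono_left nhdsWithin_le_nhds
  refine squeeze_zero_norm (fun t => ?_) hpow
  rw [norm_mul]
  exact mul_le_of_le_one_right (norm_nonneg _) (hu t)

theorem hasDerivAt_pow_mul_sin_one_div_pow (m k : ℕ) {t : ℝ} (ht : t ≠ 0) :
    HasDerivAt (fun t : ℝ => t ^ (m + k + 1) * Real.sin (1 / t ^ m))
      ((m + k + 1) * (t ^ (m + k) * Real.sin (1 / t ^ m)) - m * (t ^ k * Real.cos (1 / t ^ m)))
      t := by
  have hinv : HasDerivAt (fun t : ℝ => 1 / t ^ m) (-(m / t ^ (m + 1))) t := by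
    convert! hasDerivAt_zpow (-(m : ℤ)) t (Or.inl ht) using 1
    · ext s
      simp
    · rw [← neg_add', zpow_neg, ← Nat.cast_succ, zpow_natCast]
      push_cast
      rw [neg_mul, div_eq_mul_inv]
  convert! (hasDerivAt_pow (m + k + 1) t).mul hinv.sin using 1
  push_cast
  field_simp
  ring

theorem not_differentiableAt_deriv_of_eqOn_pow_mul_sin {m : ℕ} (hm : m ≠ 0) {h : ℝ → ℝ}
    (hh : Set.EqOn h (fun t => t ^ (m + 2) * Real.sin (1 / t ^ m)) (Set.Ioi 0)) :
    ¬ DifferentiableAt ℝ (deriv h) 0 := by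
  intro hdiff
  have hderiv : ∀ t ∈ Set.Ioi (0 : ℝ), deriv h t =
      (m + 2) * (t ^ (m + 1) * Real.sin (1 / t ^ m)) - m * (t * Real.cos (1 / t ^ m)) := by
    intro t ht
    rw [(hh.eventuallyEq_of_mem (Ioi_mem_nhds ht)).deriv_eq,
      (hasDerivAt_pow_mul_sin_one_div_pow m 1 (ne_of_gt ht)).deriv]
    push_cast
    ring
  have hsin (n : ℕ) (hn : n ≠ 0) :
      Tendsto (fun t : ℝ => t ^ n * Real.sin (1 / t ^ m)) (𝓝[>] 0) (𝓝 0) :=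
    tendsto_pow_mul_nhdsGT_zero hn fun _ => Real.abs_sin_le_one _
  have hcos : Tendsto (fun t : ℝ => t * Real.cos (1 / t ^ m)) (𝓝[>] 0) (𝓝 0) := by
    simpa only [pow_one] using
      tendsto_pow_mul_nhdsGT_zero one_ne_zero fun t => Real.abs_cos_le_one (1 / t ^ m)
  have hderiv_zero : deriv h 0 = 0 := by
    have hlim := ((hsin (m + 1) m.succ_ne_zero).const_mul (m + 2 : ℝ)).sub (hcos.const_mul (m : ℝ))
    rw [mul_zero, mul_zero, sub_zero] at hlim
    exact tendsto_nhds_unique (hdiff.continuousAt.tendsto.mono_left nhdsWithin_le_nhds)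
      (hlim.congr' (eventually_mem_nhdsWithin.mono fun t ht => (hderiv t ht).symm))
  have hslope : Tendsto (slope (deriv h) 0) (𝓝[>] 0) (𝓝 (deriv (deriv h) 0)) :=
    hdiff.hasDerivAt.tendsto_slope.mono_left (nhdsWithin_mono _ fun _ ht => ne_of_gt ht)
  refine not_tendsto_cos_one_div_pow_nhdsGT_zero hm _
    (((((hsin m hm).const_mul (m + 2 : ℝ)).sub hslope).div_const (m : ℝ)).congr' ?_)
  filter_upwards [eventually_mem_nhdsWithin] with t ht
  have ht0 : t ≠ 0 := ne_of_gt ht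
  rw [slope_def_field, hderiv_zero, hderiv t ht]
  field_simp
  ring

theorem not_contDiff_two_of_eqOn_pow_mul_sin {m : ℕ} (hm : m ≠ 0) {h : ℝ → ℝ}
    (hh : Set.EqOn h (fun t => t ^ (m + 2) * Real.sin (1 / t ^ m)) (Set.Ioi 0)) :
    ¬ ContDiff ℝ 2 h := fun hC =>
  not_differentiableAt_deriv_of_eqOn_pow_mul_sin hm hh
    ((hC.iterate_deriv' 1 1).differentiable one_ne_zero 0)

end Oscillation

section Moments

variable {E : Type*} [NormedAddCommGroup E] [MeasurableSpace E] {ρ : Measure E}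

theorem lintegral_nnnorm_pow_lt_top_of_le [IsFiniteMeasure ρ] {k n : ℕ} (hkn : k ≤ n)
    (h : ∫⁻ x, (‖x‖₊ : ℝ≥0∞) ^ n ∂ρ < ⊤) : ∫⁻ x, (‖x‖₊ : ℝ≥0∞) ^ k ∂ρ < ⊤ := by
  have hle : ∀ x : E, (‖x‖₊ : ℝ≥0∞) ^ k ≤ 1 + (‖x‖₊ : ℝ≥0∞) ^ n := by
    intro x
    rcases le_total (‖x‖₊ : ℝ≥0∞) 1 with hx | hx
    · exact (pow_le_one' hx k).trans le_self_add
    · exact (pow_le_pow_right' hx hkn).trans le_add_self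
  calc ∫⁻ x, (‖x‖₊ : ℝ≥0∞) ^ k ∂ρ ≤ ∫⁻ x, 1 + (‖x‖₊ : ℝ≥0∞) ^ n ∂ρ := lintegral_mono hle
    _ = ρ Set.univ + ∫⁻ x, (‖x‖₊ : ℝ≥0∞) ^ n ∂ρ := by
      rw [lintegral_add_left measurable_const, lintegral_one]
    _ < ⊤ := ENNReal.add_lt_top.2 ⟨measure_lt_top ρ _, h⟩

theorem memLp_id_of_lintegral_nnnorm_pow_lt_top [OpensMeasurableSpace E]
    [SecondCountableTopology E] {n : ℕ} (h : ∫⁻ x, (‖x‖₊ : ℝ≥0∞) ^ n ∂ρ < ⊤) : MemLp id n ρ := by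
  refine ⟨aestronglyMeasurable_id, ?_⟩
  rcases eq_or_ne n 0 with rfl | hn
  · simp
  · rw [eLpNorm_lt_top_iff_lintegral_rpow_enorm_lt_top (by exact_mod_cast hn) (by simp)]
    simpa [enorm_eq_nnnorm] using h

end Moments

section Fourier

variable {d : ℕ}

instance isFiniteMeasure_ctv (ν : ComplexMeasure (Vd d)) : IsFiniteMeasure (ctv ν) := by
  unfold ctv
  infer_instance

theorem integral_cexp_neg_I_mul_sum_eq_charFun (ρ : Measure (Vd d)) (ξ : Vd d) :
    ∫ x, Complex.exp (-Complex.I * ((∑ i, x i * ξ i : ℝ) : ℂ)) ∂ρ = charFun ρ (-ξ) := by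
  simp only [charFun_apply, inner_neg_right, PiLp.inner_apply, Real.inner_apply]
  push_cast
  simp only [neg_mul, mul_comm Complex.I]

theorem contDiff_charFun_neg_of_lintegral_lt_top {n : ℕ} {ρ : Measure (Vd d)} [IsFiniteMeasure ρ]
    (h : ∫⁻ x, (‖x‖₊ : ℝ≥0∞) ^ n ∂ρ < ⊤) : ContDiff ℝ n fun ξ => charFun ρ (-ξ) :=
  (contDiff_charFun (memLp_id_of_lintegral_nnnorm_pow_lt_top h)).comp contDiff_neg

theorem contDiff_ftc {n : ℕ} {ν : ComplexMeasure (Vd d)}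
    (h : ∫⁻ x, (‖x‖₊ : ℝ≥0∞) ^ n ∂ctv ν < ⊤) : ContDiff ℝ n (ftc ν) := by
  simp only [ctv, SignedMeasure.totalVariation, lintegral_add_measure, ENNReal.add_lt_top] at h
  obtain ⟨⟨hrePos, hreNeg⟩, himPos, himNeg⟩ := h
  unfold ftc cint
  simp only [integral_cexp_neg_I_mul_sum_eq_charFun]
  exact ((contDiff_charFun_neg_of_lintegral_lt_top hrePos).sub
      (contDiff_charFun_neg_of_lintegral_lt_top hreNeg)).add
    (contDiff_const.mul ((contDiff_charFun_neg_of_lintegral_lt_top himPos).sub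
      (contDiff_charFun_neg_of_lintegral_lt_top himNeg)))

theorem edist_ftc_le_dm_mul (m : ℕ) (μ ν : ComplexMeasure (Vd d)) {ξ : Vd d} (hξ : ξ ≠ 0) :
    edist (ftc μ ξ) (ftc ν ξ) ≤ dm m μ ν * ENNReal.ofReal (‖ξ‖ ^ m) := by
  have hpos : 0 < ‖ξ‖ ^ m := pow_pos (norm_pos_iff.2 hξ) m
  calc edist (ftc μ ξ) (ftc ν ξ)
      = ENNReal.ofReal (‖ftc μ ξ - ftc ν ξ‖ / ‖ξ‖ ^ m) * ENNReal.ofReal (‖ξ‖ ^ m) := by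
        rw [← ENNReal.ofReal_mul (by positivity), div_mul_cancel₀ _ hpos.ne', edist_dist,
          dist_eq_norm]
    _ ≤ dm m μ ν * ENNReal.ofReal (‖ξ‖ ^ m) := by
        gcongr
        exact le_iSup (fun ξ : {ξ : Vd d // ξ ≠ 0} =>
          ENNReal.ofReal (‖ftc μ ξ - ftc ν ξ‖ / ‖(ξ : Vd d)‖ ^ m)) ⟨ξ, hξ⟩

theorem tendsto_ftc_of_tendsto_dm {ι : Type*} {l : Filter ι} {m : ℕ}
    {μ : ι → ComplexMeasure (Vd d)} {ν : ComplexMeasure (Vd d)}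
    (h : Tendsto (fun j => dm m (μ j) ν) l (𝓝 0)) {ξ : Vd d} (hξ : ξ ≠ 0) :
    Tendsto (fun j => ftc (μ j) ξ) l (𝓝 (ftc ν ξ)) := by
  have hbound : Tendsto (fun j => dm m (μ j) ν * ENNReal.ofReal (‖ξ‖ ^ m)) l (𝓝 0) := by
    simpa only [zero_mul] using ENNReal.Tendsto.mul_const h (Or.inr ENNReal.ofReal_ne_top)
  exact tendsto_iff_edist_tendsto_0.2 (tendsto_of_tendsto_of_tendsto_of_le_of_le
    tendsto_const_nhds hbound (fun _ => zero_le) fun j => edist_ftc_le_dm_mul m (μ j) ν hξ)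

end Fourier

section LimitFunction

variable {d : ℕ} (m : ℕ) (M : (Fin d → ℕ) → ℂ)

theorem contDiff_Ppoly {n : WithTop ℕ∞} : ContDiff ℝ n (Ppoly d m M) := by
  have hcoord (i : Fin d) : ContDiff ℝ n fun ξ : Vd d => (ξ i : ℂ) :=
    Complex.ofRealCLM.contDiff.comp (by fun_prop)
  unfold Ppoly
  exact ContDiff.sum fun γ _ => contDiff_const.mul
    (contDiff_prod fun i _ => (contDiff_const.mul (hcoord i)).pow (γ i))

theorem continuous_phiFun_left (ξ : Vd d) : Continuous fun δ => phiFun d m M δ ξ := by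
  unfold phiFun
  split_ifs <;> fun_prop

theorem phiFun_zero_mul_exp_sub_Ppoly {ξ : Vd d} (hξ : ξ ≠ 0) :
    phiFun d m M 0 ξ * (Real.exp (‖ξ‖ ^ (2 * m)) : ℝ) - Ppoly d m M ξ =
      (‖ξ‖ ^ (m + 2) * Real.sin (1 / ‖ξ‖ ^ m) : ℝ) := by
  have hexp : ((Real.exp (-‖ξ‖ ^ (2 * m)) : ℝ) : ℂ) * (Real.exp (‖ξ‖ ^ (2 * m)) : ℝ) = 1 := by
    rw [← Complex.ofReal_mul, ← Real.exp_add, neg_add_cancel, Real.exp_zero, Complex.ofReal_one]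
  rw [phiFun, if_neg hξ, mul_assoc, hexp, mul_one, add_sub_cancel_left, neg_zero, zero_div,
    Real.exp_zero, mul_one]

variable {m M}

theorem not_contDiff_two_of_eqOn_phiFun_zero (hd : 0 < d) (hm : m ≠ 0) {F : Vd d → ℂ}
    (hF : Set.EqOn F (phiFun d m M 0) {0}ᶜ) : ¬ ContDiff ℝ 2 F := by
  intro hC
  set e : Vd d := EuclideanSpace.single ⟨0, hd⟩ 1 with he
  have hnorm : ∀ t ∈ Set.Ioi (0 : ℝ), ‖t • e‖ = t := by
    intro t ht
    simp [norm_smul, he, abs_of_pos (Set.mem_Ioi.1 ht)]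
  have hray : ContDiff ℝ 2 fun t : ℝ => t • e := by fun_prop
  have hexp : ContDiff ℝ 2 fun t : ℝ => ((Real.exp (t ^ (2 * m)) : ℝ) : ℂ) :=
    Complex.ofRealCLM.contDiff.comp (Real.contDiff_exp.comp (by fun_prop))
  have hsmooth : ContDiff ℝ 2 fun t : ℝ =>
      (F (t • e) * (Real.exp (t ^ (2 * m)) : ℝ) - Ppoly d m M (t • e)).re :=
    Complex.reCLM.contDiff.comp
      (((hC.comp hray).mul hexp).sub ((contDiff_Ppoly m M).comp hray))
  refine not_contDiff_two_of_eqOn_pow_mul_sin hm (fun t ht => ?_) hsmooth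
  have hne : t • e ≠ 0 := norm_pos_iff.1 ((hnorm t ht).symm ▸ ht)
  have hval := phiFun_zero_mul_exp_sub_Ppoly m M hne
  rw [hnorm t ht] at hval
  simp only [hF hne, hval, Complex.ofReal_re]

end LimitFunction

theorem stmt15_general (d m : ℕ) (hd : 0 < d) (hm : m ≠ 0) (M : (Fin d → ℕ) → ℂ)
    (μ : ℕ → ComplexMeasure (Vd d))
    (hμ : ∀ j : ℕ, 1 ≤ j → ftc (μ j) = phiFun d m M (1 / (j : ℝ))) :
    ¬ ∃ ν : ComplexMeasure (Vd d), ∫⁻ x, (‖x‖₊ : ℝ≥0∞) ^ 2 ∂ctv ν < ⊤ ∧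
      Tendsto (fun j => dm m (μ j) ν) atTop (𝓝 0) := by
  rintro ⟨ν, hν, hlim⟩
  refine not_contDiff_two_of_eqOn_phiFun_zero (M := M) hd hm (fun ξ hξ => ?_) (contDiff_ftc hν)
  have hphi : Tendsto (fun j : ℕ => phiFun d m M (1 / (j : ℝ)) ξ) atTop (𝓝 (phiFun d m M 0 ξ)) :=
    ((continuous_phiFun_left m M ξ).tendsto 0).comp tendsto_one_div_atTop_nhds_zero_nat
  refine tendsto_nhds_unique (tendsto_ftc_of_tendsto_dm hlim hξ) (hphi.congr' ?_)
  filter_upwards [eventually_ge_atTop 1] with j hj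
  rw [hμ j hj]

/-- For `m ≥ 2` and prescribed moments `M`, let `μ_j ∈ 𝓜_m^M` (for `j ≥ 1`)
be the measure whose Fourier transform is `φ_{1/j}`. Then there is no `μ ∈ 𝓜_m^M` with
`d_m(μ_j, μ) → 0` as `j → ∞`. -/
theorem stmt15 (d m : ℕ) (hd : 0 < d) (hm : 2 ≤ m) (M : (Fin d → ℕ) → ℂ)
    (μ : ℕ → ComplexMeasure (Vd d))
    (hμ : ∀ j : ℕ, 1 ≤ j →
      μ j ∈ MomentSet d m M ∧ ftc (μ j) = phiFun d m M (1 / (j : ℝ))) :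
    ¬ ∃ ν ∈ MomentSet d m M, Tendsto (fun j => dm m (μ j) ν) atTop (𝓝 0) :=
  fun ⟨ν, hν, hlim⟩ => stmt15_general d m hd (by omega) M μ (fun j hj => (hμ j hj).2)
    ⟨ν, lintegral_nnnorm_pow_lt_top_of_le hm hν.1, hlim⟩

end
end
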